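/- arXiv:2605.02632 — 2 statements merged into one kernel-verified Lean document; each statement's English description precedes it below -/
import Mathlib

section
/- Let R be a discrete valuation ring with maximal ideal m and normalized valuation v (v of a uniformizer equals 1), let r be a prime number with v(r) = 2, and let u ∈ R be an element with v(u^r − u) = 1. Then the polynomial (X + u)^r − u ∈ R[X] is Eisenstein at m. Consequently, X^r − u is irreducible over the fraction field of R. -/
open Polynomial

/-- **Lemma 5.19 (abstract form).** Let `R` be a discrete valuation ring with maximal ideal `m`
and normalized additive valuation `v` (so `v` of a uniformizer equals `1`), let `r` be a prime
with `v(r) = 2`, and let `u ∈ R` with `v(u^r - u) = 1`. Then `(X + u)^r - u` is Eisenstein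
at `m`; consequently `X^r - u` is irreducible over the fraction field of `R`. -/
theorem stmt_8 (R : Type*) [CommRing R] [IsDomain R] [IsDiscreteValuationRing R]
    (r : ℕ) (hr : r.Prime)
    (hvr : IsDiscreteValuationRing.addVal R (r : R) = 2)
    (u : R) (hu : IsDiscreteValuationRing.addVal R (u ^ r - u) = 1) :
    ((X + C u) ^ r - C u).IsEisensteinAt (IsLocalRing.maximalIdeal R) ∧
    Irreducible ((X ^ r - C u).map (algebraMap R (FractionRing R))) := by
  obtain ⟨p, hp⟩ := IsDiscreteValuationRing.exists_irreducible R
  have hm : IsLocalRing.maximalIdeal R = Ideal.span {p} := hp.maximalIdeal_eq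
  have hp1 := IsDiscreteValuationRing.addVal_uniformizer hp
  have hrm : (r : R) ∈ IsLocalRing.maximalIdeal R := by
    rw [hm, Ideal.mem_span_singleton, ← IsDiscreteValuationRing.addVal_le_iff_dvd, hp1, hvr]
    norm_num
  have hum : u ^ r - u ∈ IsLocalRing.maximalIdeal R := by
    rw [hm, Ideal.mem_span_singleton, ← IsDiscreteValuationRing.addVal_le_iff_dvd, hp1, hu]
  have hum2 : u ^ r - u ∉ IsLocalRing.maximalIdeal R ^ 2 := by
    rw [hm, Ideal.span_singleton_pow, Ideal.mem_span_singleton,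
      ← IsDiscreteValuationRing.addVal_le_iff_dvd, hp.addVal_pow, hu]
    norm_num
  have hdeg : ((X + C u) ^ r - C u).natDegree = r := by
    rw [natDegree_sub_C, natDegree_pow, natDegree_X_add_C, mul_one]
  have hmon : ((X + C u) ^ r - C u).Monic := by
    rw [Monic, leadingCoeff, hdeg, coeff_sub, coeff_X_add_C_pow, coeff_C, if_neg hr.ne_zero]
    simp
  have h0 : ((X + C u) ^ r - C u).coeff 0 = u ^ r - u := by
    rw [coeff_sub, coeff_X_add_C_pow]
    simp
  have hE : ((X + C u) ^ r - C u).IsEisensteinAt (IsLocalRing.maximalIdeal R) := by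
    refine hmon.isEisensteinAt_of_mem_of_notMem (Ideal.IsPrime.ne_top inferInstance) ?_ ?_
    · intro n hn
      rw [hdeg] at hn
      rcases Nat.eq_zero_or_pos n with rfl | hpos
      · rw [h0]; exact hum
      · rw [coeff_sub, coeff_X_add_C_pow, coeff_C, if_neg hpos.ne', sub_zero]
        obtain ⟨k, hk⟩ := hr.dvd_choose_self hpos.ne' hn
        rw [hk, Nat.cast_mul]
        exact Ideal.mul_mem_left _ _ (Ideal.mul_mem_right _ _ hrm)
    · rw [h0]; exact hum2
  refine ⟨hE, ?_⟩
  have hirr : Irreducible ((X + C u) ^ r - C u) :=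
    hE.irreducible inferInstance hmon.isPrimitive (by rw [hdeg]; exact hr.pos)
  have htay : taylorEquiv u (X ^ r - C u) = (X + C u) ^ r - C u := by
    simp [taylorEquiv, taylor_apply]
  have hirr2 : Irreducible (X ^ r - C u) := by
    rw [← htay] at hirr
    exact (MulEquiv.irreducible_iff (taylorEquiv u)).1 hirr
  exact ((monic_X_pow_sub_C u hr.ne_zero).irreducible_iff_irreducible_map_fraction_map).1 hirr2
end

section
/- Let r ≥ 5 be a prime and let z, s be nonzero integers with v_r(z) = 1 and v_r(s) = (r+1)/2. Let γ₀ be a root of F(x) = (−z)^((r−1)/2)·x·h(2 − x²/z) + s in an algebraic closure of ℚ_r, and let O be the integral closure of ℤ_r (the ring of r-adic integers) in ℚ_r(γ₀). Then the r-adic valuation of the discriminant of O over ℤ_r equals (3r − 1)/2; that is, for any ℤ_r-basis of O, the discriminant of that basis has r-adic valuation (3r − 1)/2. -/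
open Polynomial

/-- `h` is the minimal polynomial (over `ℤ`) of `ζ_r + ζ_r⁻¹`, where `ζ_r = exp(2πi/r)`
is a primitive `r`-th root of unity. -/
noncomputable def hpoly (r : ℕ) : Polynomial ℤ :=
  minpoly ℤ (Complex.exp (2 * Real.pi * Complex.I / (r : ℂ)) +
    (Complex.exp (2 * Real.pi * Complex.I / (r : ℂ)))⁻¹)

/-- The polynomial `F(x) = (-z)^((r-1)/2) · x · h(2 - x²/z) + s`, over a field `K`. -/
noncomputable def Fpoly (r : ℕ) (z s : ℤ) (K : Type*) [Field K] : Polynomial K :=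
  C ((((-z) ^ ((r - 1) / 2) : ℤ) : K)) * X *
    (((hpoly r).map (Int.castRingHom K)).comp (C 2 - C ((z : K))⁻¹ * X ^ 2)) + C ((s : K))

noncomputable def psiPoly : ℕ → Polynomial ℤ
  | 0 => 1
  | 1 => X + 1
  | (n + 2) => X * psiPoly (n + 1) - psiPoly n

lemma psi_aeval {R : Type*} [CommRing R] (t u : R) (h : t * u = 1) (n : ℕ) :
    aeval (t + u) (psiPoly n) * t ^ n * (t - 1) = t ^ (2 * n + 1) - 1 ∧
    aeval (t + u) (psiPoly (n + 1)) * t ^ (n + 1) * (t - 1) = t ^ (2 * (n + 1) + 1) - 1 := by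
  induction n with
  | zero =>
    refine ⟨by simp [psiPoly], ?_⟩
    simp [psiPoly]
    linear_combination (t-1) * h
  | succ n ih =>
    refine ⟨ih.2, ?_⟩
    obtain ⟨h1, h2⟩ := ih
    simp only [psiPoly, map_sub, map_mul, aeval_X]
    linear_combination (t ^ 2 + 1) * h2 - t ^ 2 * h1 +
      (aeval (t + u) (psiPoly (n + 1)) * t ^ (n + 1) * (t - 1)) * h

lemma psi_eval_two (n : ℕ) : (psiPoly n).eval 2 = 2 * n + 1 ∧
    (psiPoly (n + 1)).eval 2 = 2 * (n + 1) + 1 := by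
  induction n with
  | zero => simp [psiPoly]
  | succ n ih =>
    refine ⟨by simpa using ih.2, ?_⟩
    simp only [psiPoly, eval_sub, eval_mul, eval_X, ih.1, ih.2]
    push_cast
    ring

lemma psi_monic (n : ℕ) : ((psiPoly n).Monic ∧ (psiPoly n).natDegree = n) ∧
    ((psiPoly (n + 1)).Monic ∧ (psiPoly (n + 1)).natDegree = n + 1) := by
  induction n with
  | zero =>
    refine ⟨by simp [psiPoly], ?_⟩
    simp only [psiPoly, zero_add]
    exact ⟨monic_X_add_C 1, natDegree_X_add_C 1⟩
  | succ n ih =>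
    refine ⟨ih.2, ?_⟩
    obtain ⟨⟨m1, d1⟩, m2, d2⟩ := ih
    simp only [psiPoly]
    have hm : (X * psiPoly (n + 1)).Monic := monic_X.mul m2
    have hd : (X * psiPoly (n + 1)).natDegree = n + 2 := by
      rw [natDegree_X_mul m2.ne_zero, d2]
    have hlt : (psiPoly n).degree < (X * psiPoly (n + 1)).degree := by
      apply degree_lt_degree
      omega
    exact ⟨hm.sub_of_left hlt, by rw [natDegree_sub_eq_left_of_natDegree_lt (by omega), hd]⟩

lemma psi_aeval_charP (k : Type*) [Field k] [IsAlgClosed k] (r : ℕ) [Fact r.Prime] [CharP k r]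
    (n : ℕ) (hn : r = 2 * n + 1) (hn0 : n ≠ 0) (a : k) :
    aeval a (psiPoly n) = (a - 2) ^ n := by
  obtain ⟨t, ht⟩ : ∃ t : k, t * (a - t) = 1 := by
    have hdeg : (X ^ 2 - C a * X + 1 : k[X]).degree = 2 := by compute_degree!
    obtain ⟨t, ht⟩ := IsAlgClosed.exists_root (X ^ 2 - C a * X + 1 : k[X]) (by rw [hdeg]; decide)
    refine ⟨t, ?_⟩
    simp [IsRoot] at ht
    linear_combination -ht
  have key := (psi_aeval t (a - t) ht n).1
  rw [show t + (a - t) = a by ring, ← hn] at key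
  have hfr : t ^ r - 1 = (t - 1) ^ r := by rw [sub_pow_char, one_pow]
  by_cases ht1 : t = 1
  · have ha : a = 2 := by subst ht1; linear_combination ht
    subst ha
    have := (psi_eval_two n).1
    have h2 : aeval (2 : k) (psiPoly n) = ((eval 2 (psiPoly n) : ℤ) : k) := by
      have := Polynomial.aeval_algebraMap_apply k (2 : ℤ) (psiPoly n)
      simpa using this
    rw [h2, this]
    have : ((2 * (n : ℤ) + 1 : ℤ) : k) = ((r : ℕ) : k) := by 
      rw [hn]
      push_cast
      ring
    rw [this, CharP.cast_eq_zero]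
    simp [hn0]
  · have ht0 : t ≠ 0 := by rintro rfl; simp at ht
    have h3 : ((a - 2) * t) ^ n * (t - 1) = (t - 1) ^ r := by
      rw [show (a - 2) * t = (t - 1) ^ 2 by linear_combination ht]
      have : (t - 1) ^ r = (t - 1) ^ (2 * n + 1) := congrArg _ hn
      rw [this, ← pow_mul, pow_succ]
    rw [mul_pow] at h3
    have h4 : aeval a (psiPoly n) * (t ^ n * (t - 1)) = (a - 2) ^ n * (t ^ n * (t - 1)) := by
      calc aeval a (psiPoly n) * (t ^ n * (t - 1)) = aeval a (psiPoly n) * t ^ n * (t - 1) :=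
            (mul_assoc _ _ _).symm
        _ = (t - 1) ^ r := key.trans hfr
        _ = (a - 2) ^ n * t ^ n * (t - 1) := h3.symm
        _ = _ := mul_assoc _ _ _
    exact mul_right_cancel₀ (mul_ne_zero (pow_ne_zero _ ht0) (sub_ne_zero.2 ht1)) h4

lemma psi_mod (r : ℕ) [Fact r.Prime] (n : ℕ) (hn : r = 2 * n + 1) (hn0 : n ≠ 0) :
    (psiPoly n).map (Int.castRingHom (ZMod r)) = (X - C 2) ^ n := by
  let k := AlgebraicClosure (ZMod r)
  have : CharP k r := charP_of_injective_algebraMap (algebraMap (ZMod r) k).injective r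
  apply Polynomial.map_injective (algebraMap (ZMod r) k) (algebraMap (ZMod r) k).injective
  apply Polynomial.funext
  intro a
  have e1 : eval a (map (algebraMap (ZMod r) k) (map (Int.castRingHom (ZMod r)) (psiPoly n)))
      = aeval a (psiPoly n) := by
    rw [map_map, eval_map, aeval_def]
    congr 1
  rw [e1]
  have e2 : eval a (map (algebraMap (ZMod r) k) ((X - C 2) ^ n)) = (a - 2) ^ n := by
    rw [Polynomial.map_pow, Polynomial.map_sub, map_X, map_C, eval_pow, eval_sub, eval_X, eval_C,
      map_ofNat]
  rw [e2]
  exact psi_aeval_charP k r n hn hn0 a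

lemma eisenstein_of_map {R S : Type*} [CommRing R] [CommRing S] (φ : R →+* S) (I : Ideal R)
    (hI : RingHom.ker φ = I) (hI1 : I ≠ ⊤) (f : R[X]) (hf : f.Monic)
    (hmap : f.map φ = X ^ f.natDegree) (h0 : f.coeff 0 ∉ I ^ 2) : f.IsEisensteinAt I := by
  refine hf.isEisensteinAt_of_mem_of_notMem hI1 ?_ h0
  intro m hm
  rw [← hI, RingHom.mem_ker, ← coeff_map, hmap, coeff_X_pow, if_neg hm.ne]

lemma minpoly_eq_of_irred {R S : Type*} [CommRing R] [IsDomain R] [IsIntegrallyClosed R]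
    [CommRing S] [IsDomain S] [Algebra R S] [Module.IsTorsionFree R S] (x : S) (P : R[X])
    (hm : P.Monic) (hirr : Irreducible P) (hx : aeval x P = 0) : minpoly R x = P := by
  have hint : IsIntegral R x := ⟨P, hm, hx⟩
  have hd := minpoly.isIntegrallyClosed_dvd hint hx
  have hass := (minpoly.prime_of_isIntegrallyClosed hint).irreducible.associated_of_dvd hirr hd
  exact eq_of_monic_of_associated (minpoly.monic hint) hm hass

lemma psi_irred (r : ℕ) [Fact r.Prime] (n : ℕ) (hn : r = 2 * n + 1) (hn0 : n ≠ 0) :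
    Irreducible (psiPoly n) := by
  have hp : Prime (r : ℤ) := Nat.prime_iff_prime_int.1 Fact.out
  have hm := (psi_monic n).1.1
  have hd := (psi_monic n).1.2
  have hIp : (Ideal.span {(r : ℤ)}).IsPrime := (Ideal.span_singleton_prime hp.ne_zero).2 hp
  rw [← MulEquiv.irreducible_iff (taylorEquiv (2 : ℤ))]
  change Irreducible (taylor 2 (psiPoly n))
  have hm' : (taylor 2 (psiPoly n)).Monic := by
    rw [taylor_apply]; exact hm.comp_X_add_C 2
  have hd' : (taylor 2 (psiPoly n)).natDegree = n := by rw [natDegree_taylor, hd]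
  have hei : (taylor 2 (psiPoly n)).IsEisensteinAt (Ideal.span {(r : ℤ)}) := by
    refine eisenstein_of_map (Int.castRingHom (ZMod r)) _ ?_ hIp.ne_top _ hm' ?_ ?_
    · exact ZMod.ker_intCastRingHom r
    · rw [hd', taylor_apply, Polynomial.map_comp, psi_mod r n hn hn0]
      simp [map_ofNat C 2]
    · rw [taylor_coeff_zero, (psi_eval_two n).1, Ideal.span_singleton_pow,
        Ideal.mem_span_singleton]
      have : (2 * (n : ℤ) + 1) = r := by rw [hn]; push_cast; ring
      rw [this, pow_two]
      rintro ⟨c, hc⟩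
      have h1 : (r : ℤ) * c = 1 := by
        apply mul_left_cancel₀ hp.ne_zero
        linear_combination -hc
      exact hp.not_isUnit (IsUnit.of_mul_eq_one _ h1)
  exact hei.irreducible hIp hm'.isPrimitive (by omega)

lemma hpoly_eq (r : ℕ) [Fact r.Prime] (n : ℕ) (hn : r = 2 * n + 1) (hn0 : n ≠ 0) :
    hpoly r = psiPoly n := by
  have hirr := psi_irred r n hn hn0
  have hm := (psi_monic n).1.1
  have hr0 : r ≠ 0 := by omega
  have hz := Complex.isPrimitiveRoot_exp r hr0
  set ζ := Complex.exp (2 * Real.pi * Complex.I / (r : ℂ)) with hζ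
  have hroot : aeval (ζ + ζ⁻¹) (psiPoly n) = 0 := by
    have h := (psi_aeval ζ ζ⁻¹ (mul_inv_cancel₀ (hz.ne_zero hr0)) n).1
    rw [← hn, hz.pow_eq_one, sub_self] at h
    have h1 : ζ - 1 ≠ 0 := sub_ne_zero.2 (hz.ne_one (by omega))
    have h0 : ζ ^ n ≠ 0 := pow_ne_zero _ (hz.ne_zero hr0)
    simpa [h1, h0, hz.ne_zero hr0] using h
  unfold hpoly
  rw [← hζ]
  exact minpoly_eq_of_irred _ _ hm hirr hroot

lemma g_facts (r : ℕ) [Fact r.Prime] (n : ℕ) (hn : r = 2 * n + 1) (hn0 : n ≠ 0) :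
    ∃ g : ℤ[X], g = (psiPoly n).comp (C 2 - X) ∧
      g.map (Int.castRingHom (ZMod r)) = (-X) ^ n ∧ (g ^ 2).Monic ∧ (g ^ 2).natDegree = 2 * n ∧
      g.eval 0 = r ∧
      ∃ Q : ℤ[X], g + 2 * X * derivative g = C (r : ℤ) * Q ∧ Q.eval 0 = 1 := by
  have hp : Prime (r : ℤ) := Nat.prime_iff_prime_int.1 Fact.out
  refine ⟨_, rfl, ?_⟩
  set g := (psiPoly n).comp (C 2 - X) with hg
  have hm := (psi_monic n).1.1
  have hd := (psi_monic n).1.2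
  have hmap : g.map (Int.castRingHom (ZMod r)) = (-X) ^ n := by
    rw [hg, Polynomial.map_comp, psi_mod r n hn hn0]
    simp [map_ofNat C 2]
  have hlin : (C 2 - X : ℤ[X]).natDegree = 1 := by compute_degree!
  have hlc : (C 2 - X : ℤ[X]).leadingCoeff = -1 := by
    rw [leadingCoeff, hlin]; simp [coeff_X]
  have h0 : g.eval 0 = r := by
    rw [hg, eval_comp]; simp [(psi_eval_two n).1, hn]
  refine ⟨hmap, ?_, ?_, h0, ?_⟩
  · rw [Monic, leadingCoeff_pow, hg, leadingCoeff_comp (by omega), hm.leadingCoeff, hlc, hd,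
      one_mul, ← pow_mul, mul_comm, pow_mul]
    simp
  · rw [natDegree_pow, hg, natDegree_comp, hd, hlin, mul_one]
  · have hdvd : C (r : ℤ) ∣ g + 2 * X * derivative g := by
      rw [C_dvd_iff_dvd_coeff]
      intro i
      rw [← CharP.intCast_eq_zero_iff (ZMod r) r]
      have : (g + 2 * X * derivative g).map (Int.castRingHom (ZMod r)) = 0 := by
        simp only [Polynomial.map_add, Polynomial.map_mul, ← derivative_map, hmap, map_X, Polynomial.map_ofNat]
        obtain ⟨m, rfl⟩ := Nat.exists_eq_succ_of_ne_zero hn0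
        rw [derivative_pow]
        have hz : ((2 * (m + 1) + 1 : ℕ) : (ZMod r)[X]) = 0 := by
          rw [← Nat.succ_eq_add_one m, ← hn, CharP.cast_eq_zero]
        push_cast at hz
        simp
        linear_combination (-X) ^ (m + 1) * hz
      have h2 := congrArg (fun p => coeff p i) this
      simpa only [coeff_map, coeff_zero, eq_intCast] using h2
    obtain ⟨Q, hQ⟩ := hdvd
    refine ⟨Q, hQ, ?_⟩
    have h3 := congrArg (eval 0) hQ
    simp only [eval_add, eval_mul, eval_C, eval_X, mul_zero, zero_mul, add_zero, h0] at h3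
    apply mul_left_cancel₀ hp.ne_zero
    rw [← h3, mul_one]

lemma padic_norm_le_one {r : ℕ} [Fact r.Prime] {x : ℚ_[r]} (hx : IsIntegral ℤ_[r] x) :
    ‖x‖ ≤ 1 := by
  obtain ⟨y, rfl⟩ := IsIntegrallyClosed.isIntegral_iff.1 hx
  exact y.2

lemma norm_discr_le {r : ℕ} [Fact r.Prime] {E : Type*} [Field E] [Algebra ℚ_[r] E]
    {ι ι' : Type*} [Fintype ι] [Fintype ι'] [DecidableEq ι] [DecidableEq ι']
    (b : Module.Basis ι ℚ_[r] E) (b' : Module.Basis ι' ℚ_[r] E)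
    (h : ∀ i j, IsIntegral ℤ_[r] (b.toMatrix b' i j)) :
    ‖Algebra.discr ℚ_[r] b'‖ ≤ ‖Algebra.discr ℚ_[r] b‖ := by
  have e : Algebra.discr ℚ_[r] (b.reindex (b.indexEquiv b')) = Algebra.discr ℚ_[r] b := by
    rw [Module.Basis.coe_reindex, Algebra.discr_reindex]
  rw [← (b.reindex (b.indexEquiv b')).toMatrix_map_vecMul b', Algebra.discr_of_matrix_vecMul,
    norm_mul, e]
  have hint : IsIntegral ℤ_[r] ((b.reindex (b.indexEquiv b')).toMatrix b').det := by
    refine IsIntegral.det fun i j => ?_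
    rw [Module.Basis.toMatrix_apply, Module.Basis.repr_reindex_apply]
    exact h _ _
  have := padic_norm_le_one (hint.pow 2)
  exact mul_le_of_le_one_left (norm_nonneg _) this

lemma main_aux (r : ℕ) [Fact r.Prime] (n : ℕ) (hn : r = 2 * n + 1) (hn0 : n ≠ 0)
    (g : ℤ[X]) (hgmap : g.map (Int.castRingHom (ZMod r)) = (-X) ^ n) (hg2 : (g ^ 2).Monic)
    (hgd : (g ^ 2).natDegree = 2 * n) (Q : ℤ[X])
    (hQ : g + 2 * X * derivative g = C (r : ℤ) * Q) (hQ0 : Q.eval 0 = 1)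
    (c : ℤ_[r]) (hc : ‖c‖ = (r : ℝ)⁻¹)
    (E : Type*) [Field E] [Algebra ℚ_[r] E] [Algebra ℤ_[r] E] [IsScalarTower ℤ_[r] ℚ_[r] E]
    (y : E) (hy : y * (aeval y g) ^ 2 = algebraMap ℤ_[r] E c)
    (hgen : IntermediateField.adjoin ℚ_[r] {y} = ⊤)
    (ι : Type*) [Fintype ι] [DecidableEq ι]
    (b : Module.Basis ι ℤ_[r] (integralClosure ℤ_[r] E)) :
    ‖Algebra.discr ℤ_[r] b‖ ^ 2 * (r : ℝ) ^ (3 * r - 1) = 1 := by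
  have hpp : Prime (r : ℤ_[r]) := PadicInt.prime_p
  have hrpos : (0 : ℝ) < r := by exact_mod_cast (Fact.out : r.Prime).pos
  have htf : Module.IsTorsionFree ℤ_[r] E := by
    rw [Module.isTorsionFree_iff_algebraMap_injective, IsScalarTower.algebraMap_eq ℤ_[r] ℚ_[r] E]
    exact (algebraMap ℚ_[r] E).injective.comp (IsFractionRing.injective ℤ_[r] ℚ_[r])
  have hcZ : PadicInt.toZMod c = 0 := by
    rw [← RingHom.mem_ker, PadicInt.ker_toZMod, IsLocalRing.mem_maximalIdeal, PadicInt.mem_nonunits,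
      hc]
    exact inv_lt_one_of_one_lt₀ (by exact_mod_cast (Fact.out : r.Prime).one_lt)
  let G : ℤ_[r][X] := g.map (Int.castRingHom ℤ_[r])
  let P : ℤ_[r][X] := X * G ^ 2 - C c
  have hXG : (X * G ^ 2).Monic := by
    have : (G ^ 2).Monic := by
      simpa only [G, Polynomial.map_pow] using hg2.map (Int.castRingHom ℤ_[r])
    exact monic_X.mul this
  have hXGd : (X * G ^ 2).natDegree = r := by
    have : (G ^ 2).Monic := by
      simpa only [G, Polynomial.map_pow] using hg2.map (Int.castRingHom ℤ_[r])
    have h2 : (G ^ 2).natDegree = 2 * n := by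
      rw [← hgd, ← hg2.natDegree_map (Int.castRingHom ℤ_[r]), Polynomial.map_pow]
    rw [natDegree_X_mul this.ne_zero, h2]
    exact hn.symm
  have hPm : P.Monic := by
    apply hXG.sub_of_left
    apply degree_C_le.trans_lt
    rw [← natDegree_pos_iff_degree_pos, hXGd]
    omega
  have hPd : P.natDegree = r := by rw [natDegree_sub_C, hXGd]
  have hP0 : P.coeff 0 = -c := by simp [P]
  have hPei : P.IsEisensteinAt (Ideal.span {(r : ℤ_[r])}) := by
    refine eisenstein_of_map PadicInt.toZMod _ ?_ ?_ _ hPm ?_ ?_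
    · rw [PadicInt.ker_toZMod, PadicInt.maximalIdeal_eq_span_p]
    · rw [← PadicInt.maximalIdeal_eq_span_p]; exact Ideal.IsPrime.ne_top inferInstance
    · have e : (PadicInt.toZMod (p := r)).comp (Int.castRingHom ℤ_[r]) = Int.castRingHom (ZMod r) :=
        RingHom.ext_int _ _
      rw [hPd]
      simp only [P, G, Polynomial.map_sub, Polynomial.map_mul, Polynomial.map_pow, map_X, map_C,
        map_map, e, hgmap, hcZ, map_zero, sub_zero]
      rw [← pow_mul, mul_comm n 2, (even_two_mul n).neg_pow, ← pow_succ']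
      exact congrArg _ hn.symm
    · rw [hP0, Ideal.span_singleton_pow, Ideal.mem_span_singleton, ← Ideal.mem_span_singleton,
        ← PadicInt.norm_le_pow_iff_mem_span_pow, norm_neg, hc, not_le, ← zpow_neg_one]
      apply zpow_lt_zpow_right₀ (by exact_mod_cast (Fact.out : r.Prime).one_lt)
      norm_num
  have hIp : (Ideal.span {(r : ℤ_[r])}).IsPrime := (Ideal.span_singleton_prime hpp.ne_zero).2 hpp
  have hPirr : Irreducible P := hPei.irreducible hIp hPm.isPrimitive (by omega)
  have haG : ∀ q : ℤ[X], aeval y (q.map (Int.castRingHom ℤ_[r])) = aeval y q := by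
    intro q
    exact aeval_map_algebraMap ℤ_[r] y q
  have hPy : aeval y P = 0 := by
    simp only [P, G, map_sub, map_mul, map_pow, aeval_X, haG, aeval_C, hy, sub_self]
  have hyint : IsIntegral ℤ_[r] y := ⟨P, hPm, hPy⟩
  have hmin : minpoly ℤ_[r] y = P := minpoly_eq_of_irred y P hPm hPirr hPy
  have hminK : minpoly ℚ_[r] y = (minpoly ℤ_[r] y).map (algebraMap ℤ_[r] ℚ_[r]) :=
    minpoly.isIntegrallyClosed_eq_field_fractions' _ hyint
  have hyK : IsIntegral ℚ_[r] y := hyint.tower_top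
  have htop : Algebra.adjoin ℚ_[r] {y} = ⊤ := by
    rw [← IntermediateField.adjoin_simple_toSubalgebra_of_isAlgebraic hyK.isAlgebraic, hgen]
    rfl
  let B : PowerBasis ℚ_[r] E := PowerBasis.ofAdjoinEqTop' hyK htop
  have hBg : B.gen = y := PowerBasis.ofAdjoinEqTop'_gen hyK htop
  have hfin : FiniteDimensional ℚ_[r] E := B.finite
  have hrank : Module.finrank ℚ_[r] E = r := by
    rw [B.finrank, ← B.natDegree_minpoly, hBg, hminK, hmin, hPm.natDegree_map, hPd]
  -- ring of integers is generated by y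
  have hO : ∀ x : E, IsIntegral ℤ_[r] x → x ∈ Algebra.adjoin ℤ_[r] {y} := by
    intro x hx
    have hBi : IsIntegral ℤ_[r] B.gen := by rwa [hBg]
    have h1 := Algebra.discr_mul_isIntegral_mem_adjoin ℚ_[r] hBi hx
    have hdi : IsIntegral ℤ_[r] (Algebra.discr ℚ_[r] B.basis) := by
      apply Algebra.discr_isIntegral
      intro i
      rw [B.basis_eq_pow]
      exact hBi.pow _
    obtain ⟨d, hd⟩ := IsIntegrallyClosed.isIntegral_iff.1 hdi
    have hd0 : d ≠ 0 := by
      rintro rfl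
      exact Algebra.discr_not_zero_of_basis ℚ_[r] B.basis (by rw [← hd, map_zero])
    rw [← hd, algebraMap_smul] at h1
    have h2 : (r : ℤ_[r]) ^ d.valuation • x ∈ Algebra.adjoin ℤ_[r] {B.gen} := by
      have h3 := Subalgebra.smul_mem _ h1 ((PadicInt.unitCoeff hd0)⁻¹ : ℤ_[r]ˣ).val
      rw [smul_smul] at h3
      have h4 : ((PadicInt.unitCoeff hd0)⁻¹ : ℤ_[r]ˣ).val * d = (r : ℤ_[r]) ^ d.valuation := by
        rw [Units.inv_mul_eq_iff_eq_mul]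
        exact PadicInt.unitCoeff_spec hd0
      rwa [h4] at h3
    rw [← hBg]
    refine mem_adjoin_of_smul_prime_pow_smul_of_minpoly_isEisensteinAt hpp hBi hx h2 ?_
    rw [hBg, hmin]
    exact hPei
  -- comparison of discriminants
  have hloc : IsLocalization (Algebra.algebraMapSubmonoid (integralClosure ℤ_[r] E)
      (nonZeroDivisors ℤ_[r])) E :=
    IsIntegralClosure.isLocalization ℤ_[r] ℚ_[r] E (integralClosure ℤ_[r] E)
  let b' := b.localizationLocalization ℚ_[r] (nonZeroDivisors ℤ_[r]) E
  have hb' : Algebra.discr ℚ_[r] b' = algebraMap ℤ_[r] ℚ_[r] (Algebra.discr ℤ_[r] b) :=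
    Algebra.discr_localizationLocalization ℤ_[r] (nonZeroDivisors ℤ_[r]) E b
  have hnb : ‖Algebra.discr ℤ_[r] b‖ = ‖Algebra.discr ℚ_[r] B.basis‖ := by
    have e : ‖Algebra.discr ℤ_[r] b‖ = ‖Algebra.discr ℚ_[r] b'‖ := by rw [hb']; rfl
    rw [e]
    apply le_antisymm
    · apply norm_discr_le
      intro i j
      rw [Module.Basis.toMatrix_apply]
      have hx := hO (b' j) (by
        rw [Module.Basis.localizationLocalization_apply]
        exact (b j).2)
      rw [Algebra.adjoin_singleton_eq_range_aeval] at hx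
      obtain ⟨q, hq⟩ := hx
      rw [← hq]
      change IsIntegral ℤ_[r] (B.basis.repr (aeval y q) i)
      rw [aeval_eq_sum_range, map_sum, Finsupp.finsetSum_apply]
      refine IsIntegral.sum _ fun k _ => ?_
      rw [← algebraMap_smul ℚ_[r], map_smul, Finsupp.smul_apply, smul_eq_mul]
      refine IsIntegral.mul isIntegral_algebraMap ?_
      have hBi : IsIntegral ℤ_[r] B.gen := by rwa [hBg]
      refine PowerBasis.repr_pow_isIntegral hBi ?_ ?_ k i
      · intro i'
        rw [← hBg]
        have h5 := PowerBasis.repr_gen_pow_isIntegral hBi (by rw [hBg, hminK]) 1 i'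
        rwa [pow_one] at h5
      · rw [hBg, hminK]
    · apply norm_discr_le
      intro i j
      rw [Module.Basis.toMatrix_apply, B.basis_eq_pow, hBg]
      have : y ^ (j : ℕ) = algebraMap (integralClosure ℤ_[r] E) E ⟨y ^ (j : ℕ), hyint.pow _⟩ := rfl
      rw [this, Module.Basis.localizationLocalization_repr_algebraMap]
      exact isIntegral_algebraMap
  -- norms
  have hNc : ‖Algebra.norm ℚ_[r] (algebraMap ℤ_[r] E c)‖ = ((r : ℝ)⁻¹) ^ r := by
    rw [IsScalarTower.algebraMap_apply ℤ_[r] ℚ_[r] E, Algebra.norm_algebraMap, hrank, norm_pow]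
    congr 1
  have hNy : ‖Algebra.norm ℚ_[r] y‖ = (r : ℝ)⁻¹ := by
    rw [← hBg, Algebra.PowerBasis.norm_gen_eq_coeff_zero_minpoly, hBg, hminK, hmin, coeff_map, hP0,
      norm_mul, norm_pow, norm_neg, norm_one, one_pow, one_mul, map_neg, norm_neg, ← hc]
    rfl
  have hNg : ‖Algebra.norm ℚ_[r] (aeval y g)‖ ^ 2 = ((r : ℝ)⁻¹) ^ (r - 1) := by
    have := congrArg (fun t => ‖Algebra.norm ℚ_[r] t‖) hy
    simp only [map_mul, map_pow, norm_mul, norm_pow, hNy, hNc] at this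
    obtain ⟨m, hm⟩ : ∃ m, r = m + 1 := ⟨2 * n, hn⟩
    have e : ((r : ℝ)⁻¹) ^ r = (r : ℝ)⁻¹ * ((r : ℝ)⁻¹) ^ (r - 1) := by
      rw [← pow_succ']; congr 1; omega
    rw [e] at this
    exact mul_left_cancel₀ (inv_ne_zero hrpos.ne') this
  have hNQ : ‖Algebra.norm ℚ_[r] (aeval y Q)‖ = 1 := by
    let Y : integralClosure ℤ_[r] E := ⟨y, hyint⟩
    have hcoe : ∀ {A : Type} [CommRing A] [Algebra A (integralClosure ℤ_[r] E)] [Algebra A E]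
        [IsScalarTower A (integralClosure ℤ_[r] E) E] (q : A[X]),
        algebraMap (integralClosure ℤ_[r] E) E (aeval Y q) = aeval y q := by
      intro A _ _ _ _ q
      exact (aeval_algebraMap_apply E Y q).symm
    have hPY : aeval Y P = 0 := by
      apply Subtype.ext
      exact (hcoe P).trans hPy
    have hu : IsUnit (aeval Y Q) := by
      by_contra hnu
      obtain ⟨M, hM, hQM⟩ := exists_max_ideal_of_mem_nonunits hnu
      have hcM := Ideal.isMaximal_comap_of_isIntegral_of_isMaximal (R := ℤ_[r]) M
      have hle : (Ideal.span {(r : ℤ_[r])}).map (algebraMap ℤ_[r] (integralClosure ℤ_[r] E)) ≤ M := by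
        rw [Ideal.map_le_iff_le_comap, IsLocalRing.eq_maximalIdeal hcM,
          PadicInt.maximalIdeal_eq_span_p]
      have hYr := hle (hPei.isWeaklyEisensteinAt.pow_natDegree_le_of_aeval_zero_of_monic_mem_map
        hPY hPm _ le_rfl)
      have hYM : Y ∈ M := hM.isPrime.mem_of_pow_mem _ hYr
      have h1 : aeval Y Q = Y * aeval Y Q.divX + 1 := by
        conv_lhs => rw [← X_mul_divX_add Q]
        rw [coeff_zero_eq_eval_zero, hQ0]
        simp
      apply hM.ne_top
      rw [Ideal.eq_top_iff_one]
      have h2 := M.sub_mem hQM (M.mul_mem_right (aeval Y Q.divX) hYM)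
      rwa [h1, add_sub_cancel_left] at h2
    obtain ⟨w, hw⟩ := hu.exists_right_inv
    have hw' : aeval y Q * (w : E) = 1 := by
      rw [← hcoe Q]
      exact congrArg (algebraMap (integralClosure ℤ_[r] E) E) hw
    have h1 := congrArg (fun t => ‖Algebra.norm ℚ_[r] t‖) hw'
    simp only [map_mul, norm_mul, map_one, norm_one] at h1
    have hQi : IsIntegral ℤ_[r] (aeval y Q) := by
      rw [← hcoe Q]; exact (aeval Y Q).2
    have h2 := padic_norm_le_one (Algebra.isIntegral_norm ℚ_[r] hQi)
    have h3 := padic_norm_le_one (Algebra.isIntegral_norm ℚ_[r] w.2)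
    apply le_antisymm h2
    rw [← h1]
    exact mul_le_of_le_one_right (norm_nonneg _) h3
  have hder : aeval y P.derivative = aeval y g * (algebraMap ℚ_[r] E r * aeval y Q) := by
    have h1 : P.derivative = (g * (g + 2 * X * derivative g)).map (Int.castRingHom ℤ_[r]) := by
      simp only [P, G, derivative_sub, derivative_mul, derivative_X, derivative_C, derivative_pow,
        Polynomial.map_mul, Polynomial.map_add, derivative_map, map_X, Polynomial.map_ofNat]
      simp [map_ofNat C 2]
      ring
    rw [h1, haG, hQ]
    simp
  rw [hnb, Algebra.discr_powerBasis_eq_norm, hBg, hminK, hmin, derivative_map,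
    aeval_map_algebraMap, hder]
  simp only [map_mul, norm_mul, norm_pow, norm_neg, norm_one, one_pow, one_mul, hNQ, mul_one,
    Algebra.norm_algebraMap, hrank, mul_pow, hNg, Padic.norm_p]
  rw [← pow_mul, ← pow_add, inv_pow, show r - 1 + r * 2 = 3 * r - 1 by omega]
  exact inv_mul_cancel₀ (pow_ne_zero _ hrpos.ne')

/-- **Proposition 5.20.** Let `r ≥ 5` be a prime and `z, s` nonzero integers with
`v_r(z) = 1` and `v_r(s) = (r+1)/2`.  Let `γ₀` be a root of `F(x)` and `E = ℚ_r(γ₀)` the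
field generated by it over `ℚ_r`, and let `O` be the integral closure of `ℤ_r` in `E`.
Then the `r`-adic valuation of the discriminant of any `ℤ_r`-basis of `O` equals
`(3r - 1)/2`. -/
theorem stmt_10 (r : ℕ) [Fact r.Prime] (hr : 5 ≤ r)
    (z s : ℤ) (hz0 : z ≠ 0) (hs0 : s ≠ 0)
    (hz : ((z : ℚ_[r])).valuation = 1)
    (hs : 2 * ((s : ℚ_[r])).valuation = (r : ℤ) + 1)
    (E : Type*) [Field E] [Algebra ℚ_[r] E] [Algebra ℤ_[r] E]
    [IsScalarTower ℤ_[r] ℚ_[r] E]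
    (γ₀ : E) (hγ : aeval γ₀ (Fpoly r z s ℚ_[r]) = 0)
    (hgen : IntermediateField.adjoin ℚ_[r] {γ₀} = ⊤)
    (ι : Type*) [Fintype ι] [DecidableEq ι]
    (b : Module.Basis ι ℤ_[r] (integralClosure ℤ_[r] E)) :
    (((Algebra.discr ℤ_[r] ⇑b).valuation : ℚ)) = (3 * (r : ℚ) - 1) / 2 := by
  obtain ⟨n, hn⟩ : ∃ n, r = 2 * n + 1 := by
    rcases (Fact.out : r.Prime).eq_two_or_odd' with h | h
    · omega
    · exact h
  have hn0 : n ≠ 0 := by omega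
  have hn' : (r - 1) / 2 = n := by omega
  obtain ⟨g, hg, hgmap, hg2, hgd, -, Q, hQ, hQ0⟩ := g_facts r n hn hn0
  have hrpos : (0 : ℝ) < r := by exact_mod_cast (Fact.out : r.Prime).pos
  have hzK : (z : ℚ_[r]) ≠ 0 := by exact_mod_cast hz0
  have hsK : (s : ℚ_[r]) ≠ 0 := by exact_mod_cast hs0
  have hnc : ‖(s : ℚ_[r]) ^ 2 / (z : ℚ_[r]) ^ r‖ = (r : ℝ)⁻¹ := by
    rw [norm_div, norm_pow, norm_pow, Padic.norm_eq_zpow_neg_valuation hzK,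
      Padic.norm_eq_zpow_neg_valuation hsK, hz, ← zpow_natCast, ← zpow_natCast, ← zpow_mul,
      ← zpow_mul, ← zpow_sub₀ hrpos.ne', ← zpow_neg_one]
    congr 1
    push_cast
    linarith
  let c : ℤ_[r] := ⟨(s : ℚ_[r]) ^ 2 / (z : ℚ_[r]) ^ r, by
    rw [hnc]
    exact inv_le_one_of_one_le₀ (by exact_mod_cast (Fact.out : r.Prime).one_lt.le)⟩
  have hc : ‖c‖ = (r : ℝ)⁻¹ := hnc
  have hcE : algebraMap ℤ_[r] E c = (s : E) ^ 2 / (z : E) ^ r := by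
    rw [IsScalarTower.algebraMap_apply ℤ_[r] ℚ_[r] E]
    change algebraMap ℚ_[r] E ((s : ℚ_[r]) ^ 2 / (z : ℚ_[r]) ^ r) = _
    simp
  have hzE : (z : E) ≠ 0 := by
    rw [← map_intCast (algebraMap ℚ_[r] E)]
    exact (_root_.map_ne_zero _).2 hzK
  have hsE : (s : E) ≠ 0 := by
    rw [← map_intCast (algebraMap ℚ_[r] E)]
    exact (_root_.map_ne_zero _).2 hsK
  let y : E := (z : E)⁻¹ * γ₀ ^ 2
  have hF : (-(z : E)) ^ n * γ₀ * aeval y g + (s : E) = 0 := by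
    rw [← hγ]
    have e : aeval y g = aeval (2 - y) (psiPoly n) := by
      rw [hg, aeval_comp, map_sub, aeval_C, aeval_X, map_ofNat]
    rw [e]
    simp only [Fpoly, hn', hpoly_eq r n hn hn0, map_add, map_mul, aeval_comp, aeval_C, aeval_X,
      map_sub, map_pow, map_inv₀]
    have e2 := aeval_map_algebraMap ℚ_[r] (2 - y) (psiPoly n)
    simp only [algebraMap_int_eq] at e2
    rw [map_ofNat (algebraMap ℚ_[r] E) 2, map_intCast, map_intCast, map_intCast, e2]
    push_cast
    rfl
  set H := aeval y g with hH
  have hy : y * H ^ 2 = algebraMap ℤ_[r] E c := by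
    have e : (s : E) = -((-(z : E)) ^ n * γ₀ * H) := by linear_combination hF
    have e3 : (z : E) ^ r = (z : E) ^ (2 * n) * z := by rw [← pow_succ]; exact congrArg _ hn
    have e4 : (-(z : E)) ^ (n * 2) = (z : E) ^ (2 * n) := by
      rw [mul_comm, (even_two_mul n).neg_pow]
    rw [hcE, e, e3, neg_sq, mul_pow, mul_pow, ← pow_mul, e4]
    field_simp
    simp only [y]
    field_simp
  have hA : (-(z : E)) ^ n * H ≠ 0 := by
    intro h0
    apply hsE
    linear_combination hF - γ₀ * h0
  have hgen' : IntermediateField.adjoin ℚ_[r] {y} = ⊤ := by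
    rw [eq_top_iff, ← hgen, IntermediateField.adjoin_simple_le_iff]
    have hyF : y ∈ IntermediateField.adjoin ℚ_[r] {y} :=
      IntermediateField.mem_adjoin_simple_self ℚ_[r] y
    have hHF : H ∈ IntermediateField.adjoin ℚ_[r] {y} := by
      rw [hH, ← aeval_map_algebraMap ℚ_[r] y g]
      exact IntermediateField.algebra_adjoin_le_adjoin ℚ_[r] {y}
        (aeval_mem_adjoin_singleton ℚ_[r] y)
    have e : γ₀ = -(s : E) / ((-(z : E)) ^ n * H) := by
      rw [eq_div_iff hA]; linear_combination hF
    rw [e]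
    exact div_mem (neg_mem (intCast_mem _ s)) (mul_mem (pow_mem (neg_mem (intCast_mem _ z)) n) hHF)
  have key := main_aux r n hn hn0 g hgmap hg2 hgd Q hQ hQ0 c hc E y hy hgen' ι b
  set d := Algebra.discr ℤ_[r] b with hd
  have hd0 : d ≠ 0 := by
    intro h0
    rw [h0] at key
    simp at key
  rw [PadicInt.norm_eq_zpow_neg_valuation hd0, ← zpow_natCast, ← zpow_natCast, ← zpow_mul,
    ← zpow_add₀ hrpos.ne'] at key
  have h1 : (1 : ℝ) < r := by exact_mod_cast (Fact.out : r.Prime).one_lt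
  rw [zpow_eq_one_iff_right₀ hrpos.le h1.ne'] at key
  have h2 : 2 * d.valuation = 3 * r - 1 := by push_cast at key; omega
  have h3 : 2 * d.valuation + 1 = 3 * r := by omega
  have h4 : (2 * (d.valuation : ℚ) + 1) = 3 * r := by exact_mod_cast h3
  linarith
end
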